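/- arXiv:math/0502579 — 2 statements merged into one kernel-verified Lean document; each statement's English description precedes it below -/
import Mathlib

section
/- Let ε = ε(n) → 0⁺ and L = L(n) → ∞ with L·ε² → ∞, and let λ_1, …, λ_L satisfy λ_i = 1 + ε + o(ε) uniformly in 1 ≤ i ≤ L (i.e. max_i |λ_i - 1 - ε|/ε → 0). Let Z_i ~ Po(λ_i) be independent and consider the leftwalk they define. Then Pr[ESC_L] ~ 2ε as n → ∞. -/
open Filter Topology Real Finset

-- Indicator of a proposition, as a real number.
open Classical in
noncomputable def ind (P : Prop) : ℝ := if P then 1 else 0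

/-- Poisson point mass: `Pr[Po(r) = n]`. -/
noncomputable def poissonP (r : ℝ) (n : ℕ) : ℝ := Real.exp (-r) * r ^ n / n.factorial

/-- The escape condition for the leftwalk `Y_0 = 1`, `Y_i = Y_{i-1} + Z_i - 1` up to
time `L`: `Y_t > 0` for `1 ≤ t ≤ L`, i.e. `Z_1 + ⋯ + Z_t ≥ t`.  Here bin `i+1`
contains `z i` balls (0-based indexing). -/
def leftOK (L : ℕ) (z : Fin L → ℕ) : Prop :=
  ∀ t, 1 ≤ t → t ≤ L → t ≤ ∑ i ∈ Finset.univ.filter (fun i : Fin L => (i : ℕ) < t), z i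

/-- The escape condition for the rightwalk `Y_0^R = 0`, `Y_i^R = Y_{i-1}^R + 1 - Z_i^R`
up to time `L`: `Y_t^R > 0` for `1 ≤ t ≤ L`, i.e. `Z_1^R + ⋯ + Z_t^R ≤ t - 1`. -/
def rightOK (L : ℕ) (z : Fin L → ℕ) : Prop :=
  ∀ t, 1 ≤ t → t ≤ L → (∑ i ∈ Finset.univ.filter (fun i : Fin L => (i : ℕ) < t), z i) < t

/-- `Pr[ESC_L]` for the leftwalk with independent steps `Z_i ∼ Po(lam i)`. -/
noncomputable def escLProbV (lam : ℕ → ℝ) (L : ℕ) : ℝ :=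
  ∑' z : Fin L → ℕ, (∏ i : Fin L, poissonP (lam (i : ℕ)) (z i)) * ind (leftOK L z)

/-- `Pr[ESC_L]` for the leftwalk with i.i.d. steps `Z_i ∼ Po(r)`. -/
noncomputable def escLProb (r : ℝ) (L : ℕ) : ℝ := escLProbV (fun _ => r) L

/-- `Pr[ESC]` for the leftwalk with i.i.d. steps `Z_i ∼ Po(r)`: since
`ESC = ⋂_L ESC_L` is a decreasing intersection, `Pr[ESC] = inf_L Pr[ESC_L]`. -/
noncomputable def escProb (r : ℝ) : ℝ := ⨅ L : ℕ, escLProb r L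

/-- `Pr[ESC_L^R]` for the rightwalk with independent steps `Z_i^R ∼ Po(lam i)`. -/
noncomputable def escRLProbV (lam : ℕ → ℝ) (L : ℕ) : ℝ :=
  ∑' z : Fin L → ℕ, (∏ i : Fin L, poissonP (lam (i : ℕ)) (z i)) * ind (rightOK L z)

/-- `Pr[ESC_L^R]` for the rightwalk with i.i.d. steps `Z_i^R ∼ Po(r)`. -/
noncomputable def escRLProb (r : ℝ) (L : ℕ) : ℝ := escRLProbV (fun _ => r) L

/-- `Pr[ESC^R]` for the rightwalk with i.i.d. steps `Z_i^R ∼ Po(r)`. -/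
noncomputable def escRProb (r : ℝ) : ℝ := ⨅ L : ℕ, escRLProb r L

/-- Survival condition for the walk started at height `y`. -/
def okFrom (L y : ℕ) (z : Fin L → ℕ) : Prop :=
  ∀ t, t ≤ L → t < y + ∑ i ∈ Finset.univ.filter (fun i : Fin L => (i : ℕ) < t), z i

/-- Survival probability for the walk started at height `y`. -/
noncomputable def survP (lam : ℕ → ℝ) (L y : ℕ) : ℝ :=
  ∑' z : Fin L → ℕ, (∏ i : Fin L, poissonP (lam (i : ℕ)) (z i)) * ind (okFrom L y z)

lemma ind_nonneg' (P : Prop) : 0 ≤ ind P := by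
  unfold ind; split_ifs <;> norm_num

lemma ind_le_one' (P : Prop) : ind P ≤ 1 := by
  unfold ind; split_ifs <;> norm_num

lemma ind_congr' {P Q : Prop} (h : P ↔ Q) : ind P = ind Q := by
  rw [propext h]

lemma poissonP_nonneg {r : ℝ} (hr : 0 ≤ r) (n : ℕ) : 0 ≤ poissonP r n := by
  unfold poissonP; positivity

lemma hasSum_poissonP_pow (r s : ℝ) (m : ℕ) :
    HasSum (fun z => poissonP r z * s ^ (m + z)) (s ^ m * Real.exp (r * (s - 1))) := by
  have h : HasSum (fun z : ℕ => (r * s) ^ z / (z.factorial : ℝ)) (Real.exp (r * s)) := by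
    rw [Real.exp_eq_exp_ℝ]
    exact NormedSpace.expSeries_div_hasSum_exp (r * s)
  have h2 := h.mul_left (s ^ m * Real.exp (-r))
  have e : s ^ m * Real.exp (-r) * Real.exp (r * s) = s ^ m * Real.exp (r * (s - 1)) := by
    rw [mul_assoc, ← Real.exp_add]; ring_nf
  rw [e] at h2
  refine h2.congr_fun ?_ |> fun h => h
  intro z
  unfold poissonP
  rw [mul_pow, pow_add]; ring

lemma hasSum_poissonP (r : ℝ) : HasSum (fun z => poissonP r z) 1 := by
  simpa using hasSum_poissonP_pow r 1 0

lemma summable_prod_poissonP (L : ℕ) : ∀ lam : ℕ → ℝ, (∀ i < L, 0 ≤ lam i) →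
    Summable (fun z : Fin L → ℕ => ∏ i : Fin L, poissonP (lam (i : ℕ)) (z i)) := by
  induction L with
  | zero => intro lam _; exact Summable.of_finite
  | succ L ih =>
    intro lam hl
    have h1 := ih (fun i => lam (i + 1)) (fun i hi => hl (i + 1) (by omega))
    have h0 := (hasSum_poissonP (lam 0)).summable
    have h2 := h0.mul_of_nonneg h1 (fun z => poissonP_nonneg (hl 0 (by omega)) z)
      (fun z => Finset.prod_nonneg fun i _ => poissonP_nonneg (hl _ (by omega)) _)
    rw [← (Fin.consEquiv (fun _ : Fin (L + 1) => ℕ)).summable_iff]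
    refine h2.congr ?_
    rintro ⟨a, z⟩
    simp [Fin.prod_univ_succ, Fin.consEquiv]

lemma okFrom_cons (L m a : ℕ) (z : Fin L → ℕ) :
    okFrom (L + 1) (m + 1) (Fin.cons a z : Fin (L + 1) → ℕ) ↔ okFrom L (m + a) z := by
  unfold okFrom
  have key : ∀ t, ∑ i ∈ Finset.univ.filter (fun i : Fin (L + 1) => (i : ℕ) < t + 1),
      (Fin.cons a z : Fin (L + 1) → ℕ) i
      = a + ∑ i ∈ Finset.univ.filter (fun i : Fin L => (i : ℕ) < t), z i := by
    intro t
    rw [Finset.sum_filter, Fin.sum_univ_succ, Finset.sum_filter]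
    simp
  constructor
  · intro h t ht
    have := h (t + 1) (by omega)
    rw [key] at this; omega
  · intro h t ht
    rcases t with _ | t
    · omega
    · have := h t (by omega)
      rw [key]; omega

lemma survP_summand_summable (lam : ℕ → ℝ) (L y : ℕ) (hl : ∀ i < L, 0 ≤ lam i) :
    Summable (fun z : Fin L → ℕ =>
      (∏ i : Fin L, poissonP (lam (i : ℕ)) (z i)) * ind (okFrom L y z)) := by
  refine Summable.of_nonneg_of_le (fun z => ?_) (fun z => ?_) (summable_prod_poissonP L lam hl)
  · exact mul_nonneg (Finset.prod_nonneg fun i _ => poissonP_nonneg (hl _ i.2) _) (ind_nonneg' _)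
  · exact mul_le_of_le_one_right
      (Finset.prod_nonneg fun i _ => poissonP_nonneg (hl _ i.2) _) (ind_le_one' _)

lemma survP_zero_right (lam : ℕ → ℝ) (L : ℕ) : survP lam L 0 = 0 := by
  unfold survP
  have : ∀ z : Fin L → ℕ, ind (okFrom L 0 z) = 0 := by
    intro z
    unfold ind
    rw [if_neg]
    intro h
    simpa using h 0 (by omega)
  simp [this]

lemma survP_zero_left (lam : ℕ → ℝ) (m : ℕ) : survP lam 0 (m + 1) = 1 := by
  unfold survP
  have : ∀ z : Fin 0 → ℕ, ind (okFrom 0 (m + 1) z) = 1 := by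
    intro z
    unfold ind
    rw [if_pos]
    intro t ht
    omega
  simp [this]

lemma survP_succ (lam : ℕ → ℝ) (L m : ℕ) (hl : ∀ i < L + 1, 0 ≤ lam i) :
    HasSum (fun a => poissonP (lam 0) a * survP (fun i => lam (i + 1)) L (m + a))
      (survP lam (L + 1) (m + 1)) := by
  have hs := survP_summand_summable lam (L + 1) (m + 1) hl
  have h := hs.hasSum
  rw [← (Fin.consEquiv (fun _ : Fin (L + 1) => ℕ)).hasSum_iff] at h
  refine h.prod_fiberwise ?_
  intro a
  have h2 := (survP_summand_summable (fun i => lam (i + 1)) L (m + a)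
    (fun i hi => hl (i + 1) (by omega))).hasSum.mul_left (poissonP (lam 0) a)
  refine h2.congr_fun ?_ |> fun h => h
  intro z
  have := ind_congr' (okFrom_cons L m a z)
  simp [Fin.prod_univ_succ, Fin.consEquiv, this, mul_assoc]

lemma escLProbV_eq (lam : ℕ → ℝ) (L : ℕ) : escLProbV lam L = survP lam L 1 := by
  unfold escLProbV survP
  refine tsum_congr fun z => ?_
  congr 1
  apply ind_congr'
  unfold leftOK okFrom
  constructor
  · intro h t ht
    rcases t with _ | t
    · omega
    · have := h (t + 1) (by omega) ht
      omega
  · intro h t _ ht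
    have := h t ht
    omega

lemma survP_le_one (L : ℕ) : ∀ (lam : ℕ → ℝ) (y : ℕ), (∀ i < L, 0 ≤ lam i) →
    survP lam L y ≤ 1 := by
  induction L with
  | zero =>
    intro lam y _
    rcases y with _ | m
    · rw [survP_zero_right]; norm_num
    · rw [survP_zero_left]
  | succ L ih =>
    intro lam y hl
    rcases y with _ | m
    · rw [survP_zero_right]; norm_num
    · refine hasSum_le (fun a => ?_) (survP_succ lam L m hl) (hasSum_poissonP (lam 0))
      exact mul_le_of_le_one_right (poissonP_nonneg (hl 0 (by omega)) a)
        (ih _ _ fun i hi => hl (i + 1) (by omega))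

lemma survP_lower (s : ℝ) (hs0 : 0 ≤ s) (L : ℕ) : ∀ (lam : ℕ → ℝ) (y : ℕ),
    (∀ i < L, 0 ≤ lam i) → (∀ i < L, Real.exp (lam i * (s - 1)) ≤ s) →
    1 - s ^ y ≤ survP lam L y := by
  induction L with
  | zero =>
    intro lam y _ _
    rcases y with _ | m
    · rw [survP_zero_right]; simp
    · rw [survP_zero_left]; linarith [pow_nonneg hs0 (m + 1)]
  | succ L ih =>
    intro lam y hl hs
    rcases y with _ | m
    · rw [survP_zero_right]; simp
    · have h1 := (hasSum_poissonP (lam 0)).sub (hasSum_poissonP_pow (lam 0) s m)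
      have h2 := hasSum_le (fun a => ?_) h1 (survP_succ lam L m hl)
      · refine le_trans ?_ h2
        have := mul_le_mul_of_nonneg_left (hs 0 (by omega)) (pow_nonneg hs0 m)
        rw [pow_succ]; linarith
      · have := mul_le_mul_of_nonneg_left (ih (fun i => lam (i + 1)) (m + a)
          (fun i hi => hl (i + 1) (by omega)) (fun i hi => hs (i + 1) (by omega)))
          (poissonP_nonneg (hl 0 (by omega)) a)
        linarith

lemma survP_phase1 (r d : ℝ) (hr0 : 0 ≤ r) (hr1 : r ≤ 1) (hd : 0 ≤ d) (L : ℕ) :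
    ∀ (lam : ℕ → ℝ) (y : ℕ),
    (∀ i < L, 0 ≤ lam i) → (∀ i < L, (1 + d) * r ≤ Real.exp (lam i * (r - 1))) →
    survP lam L y ≤ 2 * (1 - r ^ y) + max 0 (1 - L * d) := by
  induction L with
  | zero =>
    intro lam y _ _
    have := pow_le_one₀ hr0 hr1 (n := y)
    rcases y with _ | m
    · rw [survP_zero_right]; simp
    · rw [survP_zero_left]; simp; linarith
  | succ L ih =>
    intro lam y hl hs
    have hM : 0 ≤ max 0 (1 - ((L + 1 : ℕ) : ℝ) * d) := le_max_left _ _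
    rcases y with _ | m
    · rw [survP_zero_right]; simp
    · by_cases hc : r ^ (m + 1) ≤ 1 / 2
      · have := survP_le_one (L + 1) lam (m + 1) hl
        linarith
      · push Not at hc
        have h1 := (((hasSum_poissonP (lam 0)).sub (hasSum_poissonP_pow (lam 0) r m)).mul_left 2).add
          ((hasSum_poissonP (lam 0)).mul_right (max 0 (1 - L * d)))
        have h2 := hasSum_le (fun a => ?_) (survP_succ lam L m hl) h1
        · refine le_trans h2 ?_
          have h3 := mul_le_mul_of_nonneg_left (hs 0 (by omega)) (pow_nonneg hr0 m)
          have h4 : r ^ (m + 1) = r ^ m * r := pow_succ _ _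
          have h5 : max 0 (1 - L * d) ≤ max 0 (1 - ((L + 1 : ℕ) : ℝ) * d) + d := by
            apply max_le
            · linarith
            · have := le_max_right 0 (1 - ((L + 1 : ℕ) : ℝ) * d)
              push_cast at this ⊢
              linarith
          have h6 : d * (1 / 2) ≤ d * r ^ (m + 1) := mul_le_mul_of_nonneg_left hc.le hd
          have h7 : r ^ m * ((1 + d) * r) = r ^ (m + 1) + d * r ^ (m + 1) := by rw [h4]; ring
          linarith
        · have := mul_le_mul_of_nonneg_left (ih (fun i => lam (i + 1)) (m + a)
            (fun i hi => hl (i + 1) (by omega)) (fun i hi => hs (i + 1) (by omega)))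
            (poissonP_nonneg (hl 0 (by omega)) a)
          linarith

lemma survP_phase2 (t ρ d : ℝ) (ht0 : 0 ≤ t) (ht1 : t ≤ 1) (hd : 0 ≤ d) (hρ0 : 0 ≤ ρ)
    (hρ1 : ρ ≤ 1) (k : ℕ) (hk : 1 ≤ k * d) (j : ℕ) :
    ∀ (lam : ℕ → ℝ) (y : ℕ),
    (∀ i < k + j, 0 ≤ lam i) →
    (∀ i < k + j, (1 + d) * t ^ 4 ≤ Real.exp (lam i * (t ^ 4 - 1))) →
    (∀ i < k + j, t ^ 2 ≤ Real.exp (lam i * (t ^ 2 - 1))) →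
    (∀ i < k + j, Real.exp (lam i * (t - 1)) ≤ ρ * t) →
    survP lam (k + j) y ≤ 1 - (t ^ 2) ^ y + 16 * ρ ^ j * (t ^ y - (t ^ 2) ^ y) := by
  induction j with
  | zero =>
    intro lam y hl h4 _ _
    have hp := survP_phase1 (t ^ 4) d (by positivity) (pow_le_one₀ ht0 ht1) hd k lam y hl h4
    have ho := survP_le_one k lam y hl
    rw [max_eq_left (by linarith)] at hp
    set x := t ^ y with hx
    have hx0 : 0 ≤ x := pow_nonneg ht0 y
    have hx1 : x ≤ 1 := pow_le_one₀ ht0 ht1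
    have e2 : (t ^ 2) ^ y = x ^ 2 := by rw [hx, ← pow_mul, ← pow_mul, mul_comm]
    have e4 : (t ^ 4) ^ y = x ^ 4 := by rw [hx, ← pow_mul, ← pow_mul, mul_comm]
    rw [e4] at hp
    rw [e2]
    simp only [pow_zero, mul_one, Nat.add_zero]
    by_cases hc : x ≤ 1 / 2
    · nlinarith
    · push Not at hc
      have : 2 * (1 - x ^ 4) ≤ 8 * (1 - x) := by
        nlinarith [mul_nonneg (sub_nonneg.2 hx1) (sub_nonneg.2 hx1), mul_nonneg hx0 hx0,
          mul_nonneg (sub_nonneg.2 hx1) (mul_nonneg (sub_nonneg.2 hx1) (mul_nonneg hx0 hx0)),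
          mul_nonneg (sub_nonneg.2 hx1) (mul_nonneg (sub_nonneg.2 hx1) hx0)]
      nlinarith
  | succ j ih =>
    intro lam y hl h4 h2 h1
    rcases y with _ | m
    · rw [survP_zero_right]; simp
    · have b0 := hasSum_poissonP (lam 0)
      have b1 := hasSum_poissonP_pow (lam 0) t m
      have b2 := hasSum_poissonP_pow (lam 0) (t ^ 2) m
      have b := (b0.sub b2).add ((b1.sub b2).mul_left (16 * ρ ^ j))
      have c := hasSum_le (fun a => ?_) (survP_succ lam (k + j) m hl) b
      · refine le_trans c ?_
        have g2 := mul_le_mul_of_nonneg_left (h2 0 (by omega)) (pow_nonneg (pow_nonneg ht0 2) m)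
        have g1 := mul_le_mul_of_nonneg_left (h1 0 (by omega)) (pow_nonneg ht0 m)
        have q0 : 0 ≤ 16 * ρ ^ j := by positivity
        rw [← pow_succ] at g2
        have g3 : ρ * (t ^ 2) ^ (m + 1) ≤ (t ^ 2) ^ (m + 1) :=
          mul_le_of_le_one_left (by positivity) hρ1
        have g4 : t ^ m * (ρ * t) = ρ * t ^ (m + 1) := by rw [pow_succ]; ring
        have g5 : t ^ m * Real.exp (lam 0 * (t - 1)) -
            (t ^ 2) ^ m * Real.exp (lam 0 * (t ^ 2 - 1))
            ≤ ρ * (t ^ (m + 1) - (t ^ 2) ^ (m + 1)) := by linarith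
        have g6 := mul_le_mul_of_nonneg_left g5 q0
        have g7 : 16 * ρ ^ (j + 1) * (t ^ (m + 1) - (t ^ 2) ^ (m + 1))
          = 16 * ρ ^ j * (ρ * (t ^ (m + 1) - (t ^ 2) ^ (m + 1))) := by rw [pow_succ ρ]; ring
        rw [g7]
        linarith
      · have := mul_le_mul_of_nonneg_left (ih (fun i => lam (i + 1)) (m + a)
          (fun i hi => hl (i + 1) (by omega)) (fun i hi => h4 (i + 1) (by omega))
          (fun i hi => h2 (i + 1) (by omega)) (fun i hi => h1 (i + 1) (by omega)))
          (poissonP_nonneg (hl 0 (by omega)) a)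
        refine this.trans (le_of_eq ?_)
        ring

lemma exp_neg_le_quad {u : ℝ} (hu : 0 ≤ u) : Real.exp (-u) ≤ 1 - u + u ^ 2 / 2 := by
  have h := Real.quadratic_le_exp_of_nonneg hu
  have hpos : 0 < 1 - u + u ^ 2 / 2 := by nlinarith [sq_nonneg (u - 1)]
  have h1 : 1 ≤ (1 - u + u ^ 2 / 2) * Real.exp u := by
    have := mul_le_mul_of_nonneg_left h hpos.le
    nlinarith [pow_nonneg hu 4]
  rw [Real.exp_neg, inv_le_iff_one_le_mul₀ (Real.exp_pos u)]
  exact h1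

lemma cubic_le_exp_neg {u : ℝ} (hu : 0 ≤ u) :
    1 - u + u ^ 2 / 2 - u ^ 3 / 6 ≤ Real.exp (-u) := by
  let f : ℝ → ℝ := fun u => Real.exp (-u) - (1 - u + u ^ 2 / 2 - u ^ 3 / 6)
  have hf : ∀ x, HasDerivAt f (-Real.exp (-x) - (-1 + x - x ^ 2 / 2)) x := by
    intro x
    have h1 : HasDerivAt (fun u : ℝ => Real.exp (-u)) (Real.exp (-x) * (-1)) x :=
      (hasDerivAt_neg x).exp
    have h2 : HasDerivAt (fun u : ℝ => 1 - u + u ^ 2 / 2 - u ^ 3 / 6)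
        (0 - 1 + (2 : ℕ) * x ^ (2 - 1) / 2 - (3 : ℕ) * x ^ (3 - 1) / 6) x :=
      ((((hasDerivAt_const x (1 : ℝ)).sub (hasDerivAt_id x)).add
        ((hasDerivAt_pow 2 x).div_const 2)).sub ((hasDerivAt_pow 3 x).div_const 6))
    have := h1.sub h2
    refine HasDerivAt.congr_deriv (f := f) this ?_
    norm_num
    ring
  have hm : MonotoneOn f (Set.Ici 0) := by
    refine monotoneOn_of_deriv_nonneg (convex_Ici 0)
      (fun x _ => (hf x).continuousAt.continuousWithinAt)
      (fun x _ => (hf x).differentiableAt.differentiableWithinAt) ?_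
    intro x hx
    rw [interior_Ici] at hx
    rw [(hf x).deriv]
    have := exp_neg_le_quad (le_of_lt hx)
    linarith
  have := hm (Set.mem_Ici.2 le_rfl) (Set.mem_Ici.2 hu) hu
  simp only [f] at this
  norm_num at this
  linarith

/-- condition for `t ^ 2` -/
lemma cond2 {η l : ℝ} (h0 : 0 < η) (h1 : η ≤ 1 / 100) (hu : l ≤ 1 + η - η ^ 2 / 2) :
    (1 - η) ^ 2 ≤ Real.exp (l * ((1 - η) ^ 2 - 1)) := by
  set a := 1 - (1 - η) ^ 2 with ha
  have ha0 : 0 ≤ a := by nlinarith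
  have ha1 : a ≤ 1 / 10 := by nlinarith
  have hla : l * a ≤ a + a ^ 2 / 2 := by nlinarith
  have h2 := cubic_le_exp_neg (u := a + a ^ 2 / 2) (by positivity)
  have h3 : Real.exp (-(a + a ^ 2 / 2)) ≤ Real.exp (l * ((1 - η) ^ 2 - 1)) := by
    apply Real.exp_le_exp.2
    have : l * ((1 - η) ^ 2 - 1) = - (l * a) := by rw [ha]; ring
    linarith
  have h4 : 1 - a ≤ 1 - (a + a ^ 2 / 2) + (a + a ^ 2 / 2) ^ 2 / 2 - (a + a ^ 2 / 2) ^ 3 / 6 := by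
    have : 0 ≤ a ^ 3 * (1 / 3 - a / 8 - a ^ 2 / 8 - a ^ 3 / 48) := by
      apply mul_nonneg (by positivity)
      have : a ^ 2 ≤ 1 / 100 := by nlinarith
      have : a ^ 3 ≤ 1 / 1000 := by nlinarith
      linarith
    nlinarith
  have : (1 - η) ^ 2 = 1 - a := by rw [ha]; ring
  linarith

lemma cond1 {η l : ℝ} (h0 : 0 < η) (h1 : η ≤ 1 / 100) (hl : 1 + 3 / 4 * η ≤ l) :
    Real.exp (l * ((1 - η) - 1)) ≤ (1 - η ^ 2 / 8) * (1 - η) := by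
  have h2 := exp_neg_le_quad (u := η + 3 / 4 * η ^ 2) (by positivity)
  have h3 : Real.exp (l * ((1 - η) - 1)) ≤ Real.exp (-(η + 3 / 4 * η ^ 2)) := by
    apply Real.exp_le_exp.2
    nlinarith
  have h4 : 0 ≤ η ^ 2 * (1 / 8 - 5 / 8 * η - 9 / 32 * η ^ 2) := by
    apply mul_nonneg (by positivity)
    nlinarith
  nlinarith

lemma cond4 {η l : ℝ} (h0 : 0 < η) (h1 : η ≤ 1 / 100) (hu : l ≤ 1 + η) :
    (1 + η ^ 2 / 2) * (1 - η) ^ 4 ≤ Real.exp (l * ((1 - η) ^ 4 - 1)) := by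
  set a := 1 - (1 - η) ^ 4 with ha
  have e : (1 - η) ^ 4 = 1 - a := by rw [ha]; ring
  have hq : η ^ 2 ≤ η / 100 := by nlinarith
  have hq3 : η ^ 3 ≤ η ^ 2 / 100 := by nlinarith [sq_nonneg η]
  have hq4 : 0 ≤ η ^ 3 := by positivity
  have hq5 : η ^ 4 ≤ η ^ 3 / 100 := by nlinarith
  have ea : a = 4 * η - 6 * η ^ 2 + 4 * η ^ 3 - η ^ 4 := by rw [ha]; ring
  have ha0 : 39 / 10 * η ≤ a := by linarith
  have ha1 : a ≤ 4 * η := by nlinarith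
  have hapos : 0 ≤ a := by linarith
  have h2 := cubic_le_exp_neg (u := (1 + η) * a) (by positivity)
  have h3 : Real.exp (-((1 + η) * a)) ≤ Real.exp (l * ((1 - η) ^ 4 - 1)) := by
    apply Real.exp_le_exp.2
    rw [e]
    nlinarith
  refine le_trans ?_ (h2.trans h3)
  rw [e]
  have hu1 : (1 + η) * a ≤ 5 * η := by nlinarith
  have hu2 : a ≤ (1 + η) * a := by nlinarith
  have hu0 : 0 ≤ (1 + η) * a := by positivity
  have k1 : a ^ 2 ≤ ((1 + η) * a) ^ 2 := by gcongr
  have k2 : ((1 + η) * a) ^ 3 ≤ (5 * η) ^ 3 := by gcongr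
  have k3 : (39 / 10 * η) ^ 2 ≤ a ^ 2 := by gcongr
  nlinarith

lemma condLow {ε δ l : ℝ} (h0 : 0 < ε) (hδ0 : 0 < δ) (hδ1 : δ ≤ 1 / 10) (h1 : ε ≤ δ / 10)
    (hl : 1 + ε * (1 - δ / 2) ≤ l) :
    Real.exp (l * ((1 - 2 * ε * (1 - δ)) - 1)) ≤ 1 - 2 * ε * (1 - δ) := by
  set θ := 2 * ε * (1 - δ) with hθ
  have hθ0 : 0 ≤ θ := by
    rw [hθ]; exact mul_nonneg (by linarith) (by linarith)
  set u := θ * (1 + ε * (1 - δ / 2)) with hu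
  have hu0 : 0 ≤ u := by
    rw [hu]; apply mul_nonneg hθ0; nlinarith
  have h2 := exp_neg_le_quad hu0
  have h3 : Real.exp (l * ((1 - θ) - 1)) ≤ Real.exp (-u) := by
    apply Real.exp_le_exp.2
    rw [hu]
    nlinarith
  refine h3.trans (h2.trans ?_)
  have k1 : (1 + ε * (1 - δ / 2)) ^ 2 ≤ 1 + 3 * ε := by
    have : ε * (1 - δ / 2) ≤ ε := by nlinarith
    have h' : 0 ≤ ε * (1 - δ / 2) := by apply mul_nonneg <;> linarith
    nlinarith
  have k2 : (1 - δ) * (1 + ε * (1 - δ / 2)) ^ 2 ≤ 1 - δ / 2 := by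
    have := mul_le_mul_of_nonneg_left k1 (by linarith : 0 ≤ 1 - δ)
    nlinarith
  have k3 : u ^ 2 / 2 = θ * ε * ((1 - δ) * (1 + ε * (1 - δ / 2)) ^ 2) := by
    rw [hu, hθ]; ring
  have k4 := mul_le_mul_of_nonneg_left k2 (mul_nonneg hθ0 h0.le)
  rw [k3]
  have : u = θ + θ * ε * (1 - δ / 2) := by rw [hu]; ring
  linarith

lemma main_bounds {ε δ : ℝ} {L : ℕ} {lam : ℕ → ℝ} (h0 : 0 < ε) (hδ0 : 0 < δ)
    (hδ1 : δ ≤ 1 / 20) (h1 : ε ≤ δ / 10) (hL : 4 + 8 / δ ≤ L * ε ^ 2)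
    (hlam : ∀ i < L, |lam i - (1 + ε)| ≤ δ / 2 * ε) :
    1 - δ ≤ escLProbV lam L / (2 * ε) ∧ escLProbV lam L / (2 * ε) ≤ 1 + 10 * δ := by
  have hlo : ∀ i < L, 1 + ε * (1 - δ / 2) ≤ lam i := fun i hi => by
    have := (abs_le.1 (hlam i hi)).1; linarith
  have hhi : ∀ i < L, lam i ≤ 1 + ε * (1 + δ / 2) := fun i hi => by
    have := (abs_le.1 (hlam i hi)).2; linarith
  have hnn : ∀ i < L, 0 ≤ lam i := fun i hi => by
    have := hlo i hi
    nlinarith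
  rw [escLProbV_eq, le_div_iff₀ (by positivity), div_le_iff₀ (by positivity)]
  constructor
  · have := survP_lower (1 - 2 * ε * (1 - δ)) (by nlinarith) L lam 1 hnn
      (fun i hi => condLow h0 hδ0 (by linarith) h1 (hlo i hi))
    rw [pow_one] at this
    linarith
  · set η := (1 + δ) * ε with hη
    have hηε : ε ≤ η := by rw [hη]; nlinarith
    have hη0 : 0 < η := by linarith
    have hη1 : η ≤ 1 / 100 := by rw [hη]; nlinarith
    have hLη : 4 + 8 / δ ≤ L * η ^ 2 := by
      refine hL.trans ?_
      gcongr
    have hupper : ∀ i < L, lam i ≤ 1 + η - η ^ 2 / 2 := fun i hi => by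
      have := hhi i hi
      have h' : η ^ 2 / 2 ≤ δ * ε / 2 := by
        have : (1 + δ) ^ 2 * ε ≤ δ := by nlinarith
        rw [hη]; nlinarith
      rw [hη] at h' ⊢
      linarith
    have hlower : ∀ i < L, 1 + 3 / 4 * η ≤ lam i := fun i hi => by
      have := hlo i hi
      rw [hη]; nlinarith
    have hsq : η ^ 2 ≤ 1 / 100 := by nlinarith
    have hsq0 : 0 < η ^ 2 := by positivity
    obtain ⟨k, hk1, hk2⟩ : ∃ k : ℕ, 1 ≤ k * (η ^ 2 / 2) ∧ (k : ℝ) * η ^ 2 ≤ 3 := by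
      refine ⟨⌈2 / η ^ 2⌉₊, ?_, ?_⟩
      · have := Nat.le_ceil (2 / η ^ 2)
        rw [div_le_iff₀ hsq0] at this
        linarith
      · have := (Nat.ceil_lt_add_one (by positivity : 0 ≤ 2 / η ^ 2)).le
        have h' := mul_le_mul_of_nonneg_right this hsq0.le
        have : 2 / η ^ 2 * η ^ 2 = 2 := by field_simp
        nlinarith
    have hδ8 : 0 < 8 / δ := by positivity
    have hkL : k ≤ L := by
      by_contra hcon
      push Not at hcon
      have : (L : ℝ) ≤ k := by exact_mod_cast hcon.le
      have := mul_le_mul_of_nonneg_right this hsq0.le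
      linarith
    obtain ⟨j, rfl⟩ := Nat.exists_eq_add_of_le hkL
    have hj : 8 / δ ≤ j * η ^ 2 := by
      push_cast at hLη
      linarith
    have hb := survP_phase2 (1 - η) (1 - η ^ 2 / 8) (η ^ 2 / 2) (by linarith) (by linarith)
      (by positivity) (by linarith) (by linarith) k hk1 j lam 1 hnn
      (fun i hi => cond4 hη0 hη1 (by have := hupper i hi; linarith))
      (fun i hi => cond2 hη0 hη1 (hupper i hi))
      (fun i hi => cond1 hη0 hη1 (hlower i hi))
    have hρ : (1 - η ^ 2 / 8) ^ j ≤ δ := by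
      have e1 : (1 - η ^ 2 / 8) ^ j ≤ Real.exp (-(η ^ 2 / 8)) ^ j := by
        apply pow_le_pow_left₀ (by linarith)
        exact Real.one_sub_le_exp_neg _
      rw [← Real.exp_nat_mul] at e1
      have e2 : Real.exp (j * -(η ^ 2 / 8)) ≤ Real.exp (-(1 / δ)) := by
        apply Real.exp_le_exp.2
        have : 8 / δ = 8 * (1 / δ) := by ring
        linarith
      have e3 : Real.exp (-(1 / δ)) ≤ δ := by
        rw [Real.exp_neg, inv_le_comm₀ (Real.exp_pos _) hδ0]
        have := Real.add_one_le_exp (1 / δ)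
        rw [one_div] at this ⊢
        linarith
      linarith
    have hρ0 : 0 ≤ (1 - η ^ 2 / 8) ^ j := pow_nonneg (by linarith) j
    rw [pow_one, pow_one] at hb
    set R := (1 - η ^ 2 / 8) ^ j
    have q1 : 1 - (1 - η) ^ 2 ≤ 2 * η := by nlinarith
    have q2 : (1 - η) - (1 - η) ^ 2 ≤ η := by nlinarith
    have q20 : 0 ≤ (1 - η) - (1 - η) ^ 2 := by nlinarith
    have q3 : 16 * R * ((1 - η) - (1 - η) ^ 2) ≤ 16 * δ * η := by gcongr
    have q4 : survP lam (k + j) 1 ≤ 2 * η + 16 * δ * η := by linarith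
    refine q4.trans ?_
    rw [hη]
    have : 0 ≤ δ * ε := by positivity
    have : δ * (δ * ε) ≤ 1 / 20 * (δ * ε) := by gcongr
    nlinarith

/-- Corollary `t10`: if `ε = ε(n) → 0⁺`, `L = L(n) → ∞` with
`L ε² → ∞`, and `λ_1, …, λ_L` satisfy `λ_i = 1 + ε + o(ε)` uniformly in `i`, then
for the leftwalk with independent steps `Z_i ∼ Po(λ_i)` one has `Pr[ESC_L] ∼ 2ε`. -/
theorem escL_asymp_vary (ε : ℕ → ℝ) (L : ℕ → ℕ) (lam : ℕ → ℕ → ℝ)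
    (hεpos : ∀ n, 0 < ε n) (hε0 : Tendsto ε atTop (𝓝 0))
    (hL : Tendsto L atTop atTop)
    (hLε : Tendsto (fun n : ℕ => (L n : ℝ) * ε n ^ 2) atTop atTop)
    (hlam : ∀ δ : ℝ, 0 < δ → ∀ᶠ n in atTop, ∀ i < L n,
        |lam n i - (1 + ε n)| ≤ δ * ε n) :
    Tendsto (fun n : ℕ => escLProbV (lam n) (L n) / (2 * ε n)) atTop (𝓝 1) := by
  rw [Metric.tendsto_atTop']
  have key : ∀ δ : ℝ, 0 < δ → δ ≤ 1 / 20 → ∀ᶠ n in atTop,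
      1 - δ ≤ escLProbV (lam n) (L n) / (2 * ε n) ∧
      escLProbV (lam n) (L n) / (2 * ε n) ≤ 1 + 10 * δ := by
    intro δ hδ0 hδ1
    filter_upwards [hlam (δ / 2) (by positivity), hLε.eventually_ge_atTop (4 + 8 / δ),
      hε0.eventually_le_const (by positivity : (0 : ℝ) < δ / 10)] with n a b c
    exact main_bounds (hεpos n) hδ0 hδ1 c b a
  intro e he
  have hδ0 : 0 < min (1 / 20) (e / 20) := by positivity
  obtain ⟨N, hN⟩ := eventually_atTop.1 (key _ hδ0 (min_le_left _ _))
  refine ⟨N, fun n hn => ?_⟩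
  have := hN n hn.le
  have h2 := min_le_right (1 / 20) (e / 20)
  rw [Real.dist_eq, abs_lt]
  constructor <;> linarith [this.1, this.2]
end

section
/- Let ε = ε(n) → 0⁺ and L = L(n) → ∞ with L·ε² → ∞, and let λ_1^R, …, λ_L^R satisfy λ_i^R = 1 - ε + o(ε) uniformly in 1 ≤ i ≤ L (i.e. max_i |λ_i^R - 1 + ε|/ε → 0). Let Z_i^R ~ Po(λ_i^R) be independent and consider the rightwalk they define. Then Pr[ESC_L^R] ~ ε as n → ∞. -/
open Filter Topology Real Finset

lemma hs_congr {β : Type*} {f g : β → ℝ} {a b : ℝ} (h : HasSum g b) (hf : ∀ x, f x = g x)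
    (ha : a = b) : HasSum f a := by
  have : f = g := funext hf
  rw [this, ha]; exact h

lemma pP_succ (μ : ℝ) (m : ℕ) : ((m:ℝ)+1) * poissonP μ (m+1) = μ * poissonP μ m := by
  unfold poissonP
  rw [Nat.factorial_succ]; push_cast
  have : ((m.factorial : ℕ):ℝ) ≠ 0 := by positivity
  have h2 : (m:ℝ)+1 ≠ 0 := by positivity
  field_simp
  ring

lemma pP_nonneg {μ : ℝ} (h : 0 ≤ μ) (m : ℕ) : 0 ≤ poissonP μ m := by
  unfold poissonP; positivity

lemma pP_hasSum (μ : ℝ) : HasSum (poissonP μ) 1 := by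
  have h := NormedSpace.expSeries_div_hasSum_exp (𝔸 := ℝ) μ
  have h2 := h.mul_left (Real.exp (-μ))
  rw [← Real.exp_eq_exp_ℝ, ← Real.exp_add, neg_add_cancel, Real.exp_zero] at h2
  refine hs_congr h2 (fun n => ?_) rfl
  unfold poissonP; ring

lemma pP_hasSum1 (μ : ℝ) : HasSum (fun m : ℕ => (m:ℝ) * poissonP μ m) μ := by
  rw [← hasSum_nat_add_iff' 1]
  have := (pP_hasSum μ).mul_left μ
  simp only [← pP_succ] at this
  simpa using this

lemma pP_hasSum2 (μ : ℝ) : HasSum (fun m : ℕ => (m:ℝ)^2 * poissonP μ m) (μ^2 + μ) := by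
  rw [← hasSum_nat_add_iff' 1]
  have := ((pP_hasSum1 μ).add (pP_hasSum μ)).mul_left μ
  refine hs_congr this (fun m => ?_) ?_
  · have := pP_succ μ m
    push_cast
    linear_combination ((m:ℝ)+1) * this
  · simp; ring

lemma pP_conv (a b : ℝ) (n : ℕ) :
    poissonP (a+b) n = ∑ x ∈ antidiagonal n, poissonP a x.1 * poissonP b x.2 := by
  unfold poissonP
  rw [Commute.add_pow' (Commute.all a b), Finset.mul_sum, Finset.sum_div]
  refine Finset.sum_congr rfl ?_
  rintro ⟨i, j⟩ h
  rw [HasAntidiagonal.mem_antidiagonal] at h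
  simp only at h ⊢
  subst h
  rw [neg_add, Real.exp_add, nsmul_eq_mul]
  have h1 : (((i+j).choose i : ℕ):ℝ) * i.factorial * j.factorial = (i+j).factorial := by
    rw [Nat.choose_symm_add]
    exact_mod_cast Nat.add_choose_mul_factorial_mul_factorial i j
  have : ((i.factorial : ℕ):ℝ) ≠ 0 := by positivity
  have : ((j.factorial : ℕ):ℝ) ≠ 0 := by positivity
  have : (((i+j).factorial : ℕ):ℝ) ≠ 0 := by positivity
  field_simp
  linear_combination (a ^ i * b ^ j) * h1

lemma assoc_anti (k : ℕ) (u v w : ℕ → ℝ) :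
    ∑ x ∈ antidiagonal k, (∑ y ∈ antidiagonal x.1, u y.1 * v y.2) * w x.2
    = ∑ x ∈ antidiagonal k, u x.1 * ∑ y ∈ antidiagonal x.2, v y.1 * w y.2 := by
  have := congrArg (PowerSeries.coeff k)
    (mul_assoc (PowerSeries.mk u) (PowerSeries.mk v) (PowerSeries.mk w))
  simpa [PowerSeries.coeff_mul] using this

lemma pP_dom (a b : ℝ) (ha : 0 ≤ a) (hb : 0 ≤ b) (f : ℕ → ℝ) (hf : ∀ n, 0 ≤ f n)
    (hm : Monotone f) (k : ℕ) :
    ∑ x ∈ antidiagonal k, poissonP (a+b) x.1 * f x.2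
      ≤ ∑ x ∈ antidiagonal k, poissonP a x.1 * f x.2 := by
  simp only [pP_conv]
  rw [assoc_anti]
  refine Finset.sum_le_sum fun x _ => mul_le_mul_of_nonneg_left ?_ (pP_nonneg ha _)
  calc ∑ y ∈ antidiagonal x.2, poissonP b y.1 * f y.2
      ≤ ∑ y ∈ antidiagonal x.2, poissonP b y.1 * f x.2 := by
        refine Finset.sum_le_sum fun y hy => mul_le_mul_of_nonneg_left (hm ?_) (pP_nonneg hb _)
        rw [HasAntidiagonal.mem_antidiagonal] at hy; omega
    _ = (∑ j ∈ Finset.range (x.2+1), poissonP b j) * f x.2 := by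
        rw [Finset.Nat.sum_antidiagonal_eq_sum_range_succ (fun i _ => poissonP b i * f x.2),
          Finset.sum_mul]
    _ ≤ 1 * f x.2 := by
        refine mul_le_mul_of_nonneg_right ?_ (hf _)
        exact sum_le_hasSum _ (fun i _ => pP_nonneg hb i) (pP_hasSum b)
    _ = f x.2 := one_mul _

/-- Survival probability of the walk started at `k`, computed recursively. -/
noncomputable def Qs : (ℕ → ℝ) → ℕ → ℕ → ℝ
  | _, 0, _ => 1
  | lam, L+1, k => ∑ x ∈ antidiagonal k,
      poissonP (lam 0) x.1 * Qs (fun i => lam (i+1)) L (x.2+1)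

lemma Qs_nonneg (L : ℕ) : ∀ (lam : ℕ → ℝ) (_ : ∀ i < L, 0 ≤ lam i) (k : ℕ), 0 ≤ Qs lam L k := by
  induction L with
  | zero => intros; simp [Qs]
  | succ L ih =>
    intro lam h k
    rw [Qs]
    exact Finset.sum_nonneg fun x _ => mul_nonneg (pP_nonneg (h 0 (by omega)) _)
      (ih _ (fun i hi => h (i+1) (by omega)) _)

lemma Qs_mono (L : ℕ) : ∀ (lam : ℕ → ℝ) (_ : ∀ i < L, 0 ≤ lam i), Monotone (Qs lam L) := by
  induction L with
  | zero => intro lam _ a b _; simp [Qs]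
  | succ L ih =>
    intro lam h
    refine monotone_nat_of_le_succ fun k => ?_
    have h' : ∀ i < L, 0 ≤ lam (i+1) := fun i hi => h (i+1) (by omega)
    rw [Qs, Qs, Finset.Nat.sum_antidiagonal_succ']
    have h0 := mul_nonneg (pP_nonneg (h 0 (by omega)) (k+1))
      (Qs_nonneg L (fun i => lam (i+1)) h' (0+1))
    refine le_trans ?_ (le_add_of_nonneg_left h0)
    refine Finset.sum_le_sum fun x _ => mul_le_mul_of_nonneg_left ?_ (pP_nonneg (h 0 (by omega)) _)
    exact ih _ h' (by omega)

lemma Qs_anti (L : ℕ) : ∀ (lam lam' : ℕ → ℝ) (_ : ∀ i < L, 0 ≤ lam i)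
    (_ : ∀ i < L, lam i ≤ lam' i) (k : ℕ), Qs lam' L k ≤ Qs lam L k := by
  induction L with
  | zero => intros; simp [Qs]
  | succ L ih =>
    intro lam lam' h hl k
    have h' : ∀ i < L, 0 ≤ lam (i+1) := fun i hi => h (i+1) (by omega)
    have h0 := h 0 (by omega)
    have hl0 := hl 0 (by omega)
    rw [Qs, Qs]
    refine le_trans (Finset.sum_le_sum fun x _ => mul_le_mul_of_nonneg_left
      (ih _ _ h' (fun i hi => hl (i+1) (by omega)) _) (pP_nonneg (h0.trans hl0) _)) ?_
    have := pP_dom (lam 0) (lam' 0 - lam 0) h0 (by linarith)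
      (fun l => Qs (fun i => lam (i+1)) L (l+1)) (fun n => Qs_nonneg L _ h' _)
      (fun a b hab => Qs_mono L _ h' (by omega)) k
    rwa [add_sub_cancel] at this

/-- Generalised escape condition started from height `k`. -/
def rOK (L k : ℕ) (z : Fin L → ℕ) : Prop :=
  ∀ t, 1 ≤ t → t ≤ L → (∑ i ∈ Finset.univ.filter (fun i : Fin L => (i : ℕ) < t), z i) < t + k

lemma rOK_cons (L k j : ℕ) (z : Fin L → ℕ) :
    rOK (L+1) k (Fin.cons j z : Fin (L+1) → ℕ) ↔ j ≤ k ∧ rOK L (k-j+1) z := by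
  have key : ∀ s, (∑ i ∈ Finset.univ.filter (fun i : Fin (L+1) => (i : ℕ) < s+1),
      (Fin.cons j z : Fin (L+1) → ℕ) i)
      = j + ∑ i ∈ Finset.univ.filter (fun i : Fin L => (i : ℕ) < s), z i := by
    intro s
    rw [Finset.sum_filter, Finset.sum_filter, Fin.sum_univ_succ]
    simp
  constructor
  · intro h
    have h0 := h 1 le_rfl (by omega)
    rw [key 0] at h0
    simp at h0
    refine ⟨by omega, fun t h1 h2 => ?_⟩
    have := h (t+1) (by omega) (by omega)
    rw [key] at this
    omega
  · rintro ⟨hj, h⟩ t h1 h2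
    obtain ⟨s, rfl⟩ : ∃ s, t = s+1 := ⟨t-1, by omega⟩
    rw [key]
    rcases Nat.eq_zero_or_pos s with rfl | hs
    · simp; omega
    · have := h s hs (by omega)
      omega

lemma hasSum_prod_fin {β : Type*} (f : ℕ × β → ℝ) (c : ℕ → ℝ) (s : Finset ℕ)
    (h : ∀ j ∈ s, HasSum (fun b => f (j, b)) (c j)) (h0 : ∀ j ∉ s, ∀ b, f (j, b) = 0) :
    HasSum f (∑ j ∈ s, c j) := by
  have h1 : ∀ j ∈ s, HasSum (fun x : ℕ × β => if x.1 = j then f x else 0) (c j) := by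
    intro j hj
    have inj : Function.Injective (fun b : β => (j, b)) := fun a b hab => by simpa using hab
    rw [← inj.hasSum_iff]
    · simpa [Function.comp_def] using h j hj
    · rintro ⟨x, b⟩ hx
      have : x ≠ j := by rintro rfl; exact hx ⟨b, rfl⟩
      simp [this]
  convert hasSum_sum h1 using 1
  funext ⟨x, b⟩
  simp only [Finset.sum_ite_eq]
  split_ifs with hx
  · rfl
  · exact h0 x hx b

lemma Qs_hasSum (L : ℕ) : ∀ (lam : ℕ → ℝ) (k : ℕ),
    HasSum (fun z : Fin L → ℕ => (∏ i : Fin L, poissonP (lam (i : ℕ)) (z i)) * ind (rOK L k z))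
      (Qs lam L k) := by
  induction L with
  | zero =>
    intro lam k
    have : ∀ z : Fin 0 → ℕ, rOK 0 k z := fun z t h1 h2 => by omega
    simp only [this, ind, Qs]
    refine hs_congr (hasSum_unique (fun _ : Fin 0 → ℕ => (1:ℝ))) (fun z => ?_) rfl
    simp
  | succ L ih =>
    intro lam k
    rw [← (Fin.consEquiv (fun _ : Fin (L+1) => ℕ)).hasSum_iff, Qs,
      Finset.Nat.sum_antidiagonal_eq_sum_range_succ
        (fun a b => poissonP (lam 0) a * Qs (fun i => lam (i+1)) L (b+1))]
    refine hasSum_prod_fin _ _ _ ?_ ?_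
    · intro j hj
      have hj' : j ≤ k := by simp at hj; omega
      refine hs_congr ((ih (fun i => lam (i+1)) (k-j+1)).mul_left (poissonP (lam 0) j))
        (fun z => ?_) rfl
      simp [Fin.consEquiv, rOK_cons, hj', Fin.prod_univ_succ]
      ring
    · intro j hj b
      have hj' : ¬ j ≤ k := by simp at hj; omega
      simp [Fin.consEquiv, rOK_cons, hj', ind]

lemma esc_eq (lam : ℕ → ℝ) (L : ℕ) : escRLProbV lam L = Qs lam L 0 := by
  have := (Qs_hasSum L lam 0).tsum_eq
  rw [← this]; rfl

/-- Poisson-weighted ballot numbers. -/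
noncomputable def gb (r : ℝ) (a m : ℕ) : ℝ :=
  poissonP (r*a) m - r * (if m = 0 then 0 else poissonP (r*a) (m-1))

lemma gb_conv (r : ℝ) (a m : ℕ) :
    gb r (a+1) m = ∑ x ∈ antidiagonal m, gb r a x.1 * poissonP r x.2 := by
  have e : r * ((a+1 : ℕ):ℝ) = r * a + r := by push_cast; ring
  unfold gb
  rw [e]
  simp only [sub_mul, Finset.sum_sub_distrib]
  rw [← pP_conv]
  congr 1
  cases m with
  | zero => simp
  | succ m =>
    rw [Finset.Nat.sum_antidiagonal_succ]
    simp [mul_assoc, ← Finset.mul_sum, pP_conv]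

lemma gb_diag (r : ℝ) (a : ℕ) : gb r (a+1) (a+1) = 0 := by
  have := pP_succ (r * ((a+1 : ℕ):ℝ)) a
  unfold gb
  have h : ((a:ℝ)+1) ≠ 0 := by positivity
  apply mul_left_cancel₀ h
  push_cast at *
  simp only [Nat.succ_ne_zero, if_false, Nat.add_sub_cancel, mul_zero]
  linear_combination this

lemma gb_eq (r : ℝ) (a m : ℕ) : (a:ℝ) * gb r a m = (a - m) * poissonP (r*a) m := by
  cases m with
  | zero => simp [gb]
  | succ m =>
    have := pP_succ (r * a) m
    simp [gb]
    linear_combination this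

lemma F_step (r : ℝ) (a b : ℕ) :
    ∑ x ∈ antidiagonal (a+1), gb r (a+1) x.1 * Qs (fun _ => r) b x.2
    = ∑ x ∈ antidiagonal a, gb r a x.1 * Qs (fun _ => r) (b+1) x.2 := by
  rw [Finset.Nat.sum_antidiagonal_succ', gb_diag]
  simp only [Qs]
  rw [← assoc_anti a (gb r a) (poissonP r) (fun l => Qs (fun _ => r) b (l+1))]
  simp [gb_conv]

lemma F_all (r : ℝ) (a b : ℕ) :
    ∑ x ∈ antidiagonal a, gb r a x.1 * Qs (fun _ => r) b x.2 = Qs (fun _ => r) (a+b) 0 := by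
  induction a generalizing b with
  | zero => simp [gb, poissonP]
  | succ a ih => rw [F_step, ih]; congr 1; omega

lemma Qs_const (r : ℝ) (L : ℕ) :
    (L:ℝ) * Qs (fun _ => r) L 0 = ∑ m ∈ Finset.range (L+1), ((L:ℝ) - m) * poissonP (r*L) m := by
  have := F_all r L 0
  rw [add_zero] at this
  rw [← this]
  simp only [Qs, mul_one]
  rw [Finset.Nat.sum_antidiagonal_eq_sum_range_succ (fun i _ => gb r L i), Finset.mul_sum]
  exact Finset.sum_congr rfl fun m _ => gb_eq r L m

lemma Qs_lower (r : ℝ) (hr : 0 ≤ r) (L : ℕ) (hL : 0 < L) : 1 - r ≤ Qs (fun _ => r) L 0 := by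
  have hL' : (0:ℝ) < L := by exact_mod_cast hL
  have hs : HasSum (fun m : ℕ => ((L:ℝ) - m) * poissonP (r*L) m) (L - r * L) := by
    refine hs_congr (((pP_hasSum (r*L)).mul_left (L:ℝ)).sub (pP_hasSum1 (r*L))) (fun m => ?_) ?_
    · ring
    · ring
  have : (L:ℝ) - r*L ≤ ∑ m ∈ Finset.range (L+1), (((L:ℝ) - m) * poissonP (r*L) m) := by
    have h1 := (hasSum_nat_add_iff' (L+1)).2 hs
    have h2 := hasSum_le (fun m => ?_) h1 hasSum_zero
    · linarith
    · refine mul_nonpos_of_nonpos_of_nonneg ?_ (pP_nonneg (by positivity) _)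
      push_cast; linarith [(Nat.cast_nonneg m : (0:ℝ) ≤ m)]
  rw [← Qs_const] at this
  have h2 : (L:ℝ) * (1 - r) ≤ L * Qs (fun _ => r) L 0 := by linarith
  exact le_of_mul_le_mul_left h2 hL'

lemma Qs_upper (r : ℝ) (hr : 0 ≤ r) (hr1 : r < 1) (L : ℕ) (hL : 0 < L) :
    Qs (fun _ => r) L 0 ≤ (1 - r) + r / (2 * (1 - r) * L) := by
  have hL' : (0:ℝ) < L := by exact_mod_cast hL
  have hc : 0 < (1-r) * L := by nlinarith
  have hs : HasSum (fun m : ℕ => (((L:ℝ) - m)^2 / ((1-r)*L) + (1-r)*L)/2 * poissonP (r*L) m)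
      (L * ((1 - r) + r / (2 * (1 - r) * L))) := by
    refine hs_congr ((((((pP_hasSum (r*L)).mul_left ((L:ℝ)^2)).sub
      ((pP_hasSum1 (r*L)).mul_left (2*(L:ℝ)))).add (pP_hasSum2 (r*L))).mul_left
        (1/(2*((1-r)*L)))).add ((pP_hasSum (r*L)).mul_left ((1-r)*L/2))) (fun m => ?_) ?_
    · have : 1 - r ≠ 0 := by linarith
      field_simp; ring
    · have : 1 - r ≠ 0 := by linarith
      field_simp; ring
  have h1 : ∀ m : ℕ, ((L:ℝ) - m) ≤ (((L:ℝ) - m)^2 / ((1-r)*L) + (1-r)*L)/2 := by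
    intro m
    set c := (1-r)*L
    rw [div_add' _ _ _ hc.ne', div_div, le_div_iff₀ (by positivity)]
    nlinarith [sq_nonneg ((L:ℝ) - m - c)]
  have hp := pP_nonneg (μ := r*L) (by positivity)
  have h2 := Qs_const r L
  have h3 : ∑ m ∈ Finset.range (L+1), ((L:ℝ) - m) * poissonP (r*L) m ≤
      L * ((1 - r) + r / (2 * (1 - r) * L)) := by
    refine le_trans (Finset.sum_le_sum fun m _ => mul_le_mul_of_nonneg_right (h1 m) (hp m)) ?_
    exact sum_le_hasSum _ (fun m _ => mul_nonneg (by positivity) (hp m)) hs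
  rw [← h2] at h3
  exact le_of_mul_le_mul_left h3 (by exact_mod_cast hL)

/-- Corollary `t11`: if `ε = ε(n) → 0⁺`, `L = L(n) → ∞` with
`L ε² → ∞`, and `λ_1^R, …, λ_L^R` satisfy `λ_i^R = 1 - ε + o(ε)` uniformly in `i`,
then for the rightwalk with independent steps `Z_i^R ∼ Po(λ_i^R)` one has
`Pr[ESC_L^R] ∼ ε`. -/
theorem escRL_asymp_vary (ε : ℕ → ℝ) (L : ℕ → ℕ) (lam : ℕ → ℕ → ℝ)
    (hεpos : ∀ n, 0 < ε n) (hε0 : Tendsto ε atTop (𝓝 0))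
    (hL : Tendsto L atTop atTop)
    (hLε : Tendsto (fun n : ℕ => (L n : ℝ) * ε n ^ 2) atTop atTop)
    (hlam : ∀ δ : ℝ, 0 < δ → ∀ᶠ n in atTop, ∀ i < L n,
        |lam n i - (1 - ε n)| ≤ δ * ε n) :
    Tendsto (fun n : ℕ => escRLProbV (lam n) (L n) / ε n) atTop (𝓝 1) := by
  have hr : Tendsto (fun n => 1 / ((L n : ℝ) * ε n ^ 2)) atTop (𝓝 0) := by
    simp only [one_div]
    exact hLε.inv_tendsto_atTop
  rw [Metric.tendsto_nhds]
  intro η hη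
  set δ := min (η/4) (1/2) with hδ
  have hδ0 : 0 < δ := by positivity
  have hδ1 : δ ≤ η/4 := min_le_left _ _
  have hδ2 : δ ≤ 1/2 := min_le_right _ _
  filter_upwards [hlam δ hδ0, hε0.eventually_lt_const (show (0:ℝ) < 1/2 by norm_num),
    hr.eventually_lt_const (show (0:ℝ) < η/4 by positivity),
    hL.eventually_gt_atTop 0] with n h1 h2 h3 h4
  have he := hεpos n
  have hL' : (0:ℝ) < L n := by exact_mod_cast h4
  have hde : δ * ε n ≤ ε n / 2 := by nlinarith
  have hlow : ∀ i < L n, 1 - (1+δ) * ε n ≤ lam n i := fun i hi => by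
    have := (abs_le.1 (h1 i hi)).1; linarith
  have hupp : ∀ i < L n, lam n i ≤ 1 - (1-δ) * ε n := fun i hi => by
    have := (abs_le.1 (h1 i hi)).2; linarith
  have hr0 : 0 ≤ 1 - (1+δ) * ε n := by linarith
  have A := Qs_anti (L n) (fun _ => 1 - (1+δ) * ε n) (lam n) (fun _ _ => hr0) hlow 0
  have B := Qs_anti (L n) (lam n) (fun _ => 1 - (1-δ) * ε n)
    (fun i hi => hr0.trans (hlow i hi)) hupp 0
  have C := Qs_lower (1 - (1-δ) * ε n) (by nlinarith) (L n) h4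
  have D := Qs_upper (1 - (1+δ) * ε n) hr0 (by nlinarith) (L n) h4
  have E : (1 - (1+δ) * ε n) / (2 * (1 - (1 - (1+δ) * ε n)) * L n)
      ≤ ε n * (1 / ((L n : ℝ) * ε n ^ 2)) := by
    have : ε n * (1 / ((L n : ℝ) * ε n ^ 2)) = 1 / (ε n * L n) := by field_simp
    rw [this]
    apply div_le_div₀ zero_le_one (by nlinarith) (by positivity)
    apply mul_le_mul_of_nonneg_right _ hL'.le
    nlinarith
  have F : ε n * (1 / ((L n : ℝ) * ε n ^ 2)) ≤ ε n * (η/4) :=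
    mul_le_mul_of_nonneg_left h3.le he.le
  have G : δ * ε n ≤ η/4 * ε n := mul_le_mul_of_nonneg_right hδ1 he.le
  have H : 0 < η * ε n := by positivity
  rw [esc_eq, Real.dist_eq, div_sub_one he.ne', abs_div, abs_of_pos he, div_lt_iff₀ he, abs_lt]
  constructor <;> linarith
end
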